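/- arXiv:2602.13090 — 6 statements merged into one kernel-verified Lean document; each statement's English description precedes it below -/
import Mathlib

section
/- Fix integers 0 ≤ c_min < c_max and a block-tuple M = (m_{c_min}, …, m_{c_max}). Let N(M) denote the number of valid tuples for M. If m_{c_max−1} = 1, then N(M) = 2·N(M'). If m_{c_max−1} ≥ 3 and c_max ≥ c_min + 2, then N(M) = 3·N(M') − N(M''). (This is the combinatorial form of the paper's recursion for the number of local Arthur packets containing a tempered block not starting at zero.) -/
/-- `M` is a block-tuple on `{cmin, …, cmax}`: each entry is a positive odd integer. -/
def IsBlockTuple (cmin cmax : ℕ) (M : ℕ → ℕ) : Prop :=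
  ∀ c ∈ Finset.Icc cmin cmax, 0 < M c ∧ Odd (M c)

/-- `S = (S_1, …, S_k)` is a valid tuple for the block-tuple `M` on `{cmin, …, cmax}`:
(1) each `S_i` is a nonempty set of consecutive integers;
(2) the union of the `S_i` is `{cmin, …, cmax}`;
(3) if `i < j`, `s ∈ S_i`, `t ∈ S_j` then `s ≤ t`;
(4) if `i < j` and `c ∈ S_i ∩ S_j` then `j = i + 1`, `|S_j| ≥ 2` and `m_c > 1`;
(5) if `i ≥ 2` (1-indexed), `|S_i| ≥ 2` and `c = min S_i` has `m_c > 1`, then `c ∈ S_{i-1}`. -/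
def IsValidTuple (cmin cmax : ℕ) (M : ℕ → ℕ) (S : List (Finset ℕ)) : Prop :=
  (∀ i : Fin S.length, ∃ a b : ℕ, a ≤ b ∧ S.get i = Finset.Icc a b) ∧
  (∀ c : ℕ, c ∈ Finset.Icc cmin cmax ↔ ∃ i : Fin S.length, c ∈ S.get i) ∧
  (∀ i j : Fin S.length, i < j → ∀ s ∈ S.get i, ∀ t ∈ S.get j, s ≤ t) ∧
  (∀ i j : Fin S.length, i < j → ∀ c : ℕ, c ∈ S.get i → c ∈ S.get j →
    (j : ℕ) = (i : ℕ) + 1 ∧ 2 ≤ (S.get j).card ∧ 1 < M c) ∧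
  (∀ i : Fin S.length, 1 ≤ (i : ℕ) → 2 ≤ (S.get i).card →
    ∀ c : ℕ, c ∈ S.get i → (∀ x ∈ S.get i, c ≤ x) → 1 < M c →
    ∃ j : Fin S.length, (j : ℕ) + 1 = (i : ℕ) ∧ c ∈ S.get j)

/-- `N(M)`: the number of valid tuples for the block-tuple `M` on `{cmin, …, cmax}`. -/
noncomputable def numValid (cmin cmax : ℕ) (M : ℕ → ℕ) : ℕ :=
  {S : List (Finset ℕ) | IsValidTuple cmin cmax M S}.ncard

open Finset in
theorem valid_iff (cmin n : ℕ) (M : ℕ → ℕ) (S : List (Finset ℕ)) :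
    IsValidTuple cmin n M S ↔
  (∀ (i : ℕ) (A : Finset ℕ), S[i]? = some A → ∃ a b : ℕ, a ≤ b ∧ A = Finset.Icc a b) ∧
  (∀ c : ℕ, (cmin ≤ c ∧ c ≤ n) ↔ ∃ (i : ℕ) (A : Finset ℕ), S[i]? = some A ∧ c ∈ A) ∧
  (∀ (i j : ℕ) (A B : Finset ℕ), S[i]? = some A → S[j]? = some B → i < j → ∀ s ∈ A, ∀ t ∈ B, s ≤ t) ∧
  (∀ (i j : ℕ) (A B : Finset ℕ), S[i]? = some A → S[j]? = some B → i < j → ∀ c : ℕ, c ∈ A → c ∈ B →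
    j = i + 1 ∧ 2 ≤ B.card ∧ 1 < M c) ∧
  (∀ (i : ℕ) (B : Finset ℕ), S[i]? = some B → 1 ≤ i → 2 ≤ B.card →
    ∀ c : ℕ, c ∈ B → (∀ x ∈ B, c ≤ x) → 1 < M c →
    ∃ (j : ℕ) (A : Finset ℕ), S[j]? = some A ∧ j + 1 = i ∧ c ∈ A) := by
  unfold IsValidTuple
  simp only [Fin.forall_iff, Fin.exists_iff, List.get_eq_getElem, List.getElem?_eq_some_iff,
    Finset.mem_Icc, Fin.lt_def]
  refine and_congr ?_ (and_congr ?_ (and_congr ?_ (and_congr ?_ ?_)))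
  · exact ⟨fun h i A ⟨hi, e⟩ => e ▸ h i hi, fun h i hi => h i _ ⟨hi, rfl⟩⟩
  · refine forall_congr' fun c => ?_
    grind
  · grind
  · grind
  · constructor
    · rintro h i B ⟨hi, rfl⟩ h1 h2 c hc hx hm
      obtain ⟨j, hj, h3, h4⟩ := h i hi h1 h2 c hc hx hm
      exact ⟨j, _, ⟨hj, rfl⟩, h3, h4⟩
    · rintro h i hi h1 h2 c hc hx hm
      obtain ⟨j, _, ⟨hj, rfl⟩, h3, h4⟩ := h i _ ⟨hi, rfl⟩ h1 h2 c hc hx hm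
      exact ⟨j, hj, h3, h4⟩

theorem snoc_get (L : List (Finset ℕ)) (T A : Finset ℕ) (i : ℕ) :
    (L ++ [T])[i]? = some A ↔ L[i]? = some A ∨ (i = L.length ∧ A = T) := by
  rw [List.getElem?_append]
  split_ifs with h
  · constructor
    · exact Or.inl
    · rintro (h1 | h1)
      · exact h1
      · omega
  · have : L[i]? = none := by simp; omega
    rw [this]
    constructor
    · intro h1
      right
      have : i - L.length = 0 := by
        by_contra h2
        obtain ⟨k, hk⟩ := Nat.exists_eq_succ_of_ne_zero h2
        simp [hk] at h1
      simp [this] at h1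
      exact ⟨by omega, h1.symm⟩
    · rintro (h1 | ⟨rfl, rfl⟩)
      · simp at h1
      · simp

theorem valid_last {cmin n : ℕ} {M : ℕ → ℕ} {L : List (Finset ℕ)} {T : Finset ℕ} (h : cmin ≤ n)
    (hV : IsValidTuple cmin n M (L ++ [T])) : ∃ a, a ≤ n ∧ cmin ≤ a ∧ T = Finset.Icc a n := by
  rw [valid_iff] at hV
  obtain ⟨h1, h2, h3, h4, h5⟩ := hV
  have hT : (L ++ [T])[L.length]? = some T := by simp
  obtain ⟨a, d, had, rfl⟩ := h1 _ _ hT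
  have hd := (h2 d).2 ⟨_, _, hT, by simp [had]⟩
  have ha := (h2 a).2 ⟨_, _, hT, by simp [had]⟩
  obtain ⟨i, A, hA, hn⟩ := (h2 n).1 ⟨h, le_rfl⟩
  have : d = n := by
    rcases (snoc_get _ _ _ _).1 hA with hA' | ⟨rfl, rfl⟩
    · have hi : i < L.length := by
        by_contra hh
        have : L[i]? = none := by simp; omega
        simp [this] at hA'
      have := h3 _ _ _ _ hA hT hi n hn a (by simp [had])
      omega
    · have := (Finset.mem_Icc.1 hn).2
      omega
  subst this
  exact ⟨a, had, ha.1, rfl⟩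

def PP (cmin : ℕ) (M : ℕ → ℕ) (L : List (Finset ℕ)) (a n : ℕ) : Prop :=
  (L = [] ∧ a = cmin) ∨ ∃ b, cmin ≤ b ∧ IsValidTuple cmin b M L ∧
    ((a = b + 1 ∧ (a = n ∨ M a ≤ 1)) ∨ (a = b ∧ b < n ∧ 1 < M b))

theorem valid_ne_nil {cmin n : ℕ} {M : ℕ → ℕ} {L : List (Finset ℕ)} (h : cmin ≤ n)
    (hV : IsValidTuple cmin n M L) : L ≠ [] := by
  rintro rfl
  rw [valid_iff] at hV
  have := (hV.2.1 n).1 ⟨h, le_rfl⟩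
  simp at this

theorem valid_single (cmin n : ℕ) (M : ℕ → ℕ) (h : cmin ≤ n) :
    IsValidTuple cmin n M [Finset.Icc cmin n] := by
  have key : ∀ i A, [Finset.Icc cmin n][i]? = some A ↔ i = 0 ∧ A = Finset.Icc cmin n := by
    intro i A
    simpa using snoc_get [] (Finset.Icc cmin n) A i
  rw [valid_iff]
  simp only [key]
  refine ⟨?_, ?_, ?_, ?_, ?_⟩
  · rintro i A ⟨rfl, rfl⟩; exact ⟨_, _, h, rfl⟩
  · intro c
    constructor
    · intro hc; exact ⟨0, _, ⟨rfl, rfl⟩, by simpa using hc⟩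
    · rintro ⟨i, A, ⟨rfl, rfl⟩, hc⟩; simpa using hc
  · intros; omega
  · intros; omega
  · intros; omega

theorem lt_of_get {L : List (Finset ℕ)} {i : ℕ} {A : Finset ℕ} (h : L[i]? = some A) :
    i < L.length := by
  by_contra hh
  have : L[i]? = none := by simp; omega
  simp [this] at h

theorem valid_snoc_fwd {cmin n : ℕ} {M : ℕ → ℕ} {L : List (Finset ℕ)} {T : Finset ℕ}
    (h : cmin ≤ n) (hV : IsValidTuple cmin n M (L ++ [T])) :
    ∃ a, a ≤ n ∧ T = Finset.Icc a n ∧ PP cmin M L a n := by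
  obtain ⟨a, han, hca, rfl⟩ := valid_last h hV
  refine ⟨a, han, rfl, ?_⟩
  rw [valid_iff] at hV
  obtain ⟨h1, h2, h3, h4, h5⟩ := hV
  have hT : (L ++ [Finset.Icc a n])[L.length]? = some (Finset.Icc a n) := by simp
  have hinc : ∀ i A, L[i]? = some A → (L ++ [Finset.Icc a n])[i]? = some A :=
    fun i A hA => (snoc_get _ _ _ _).2 (Or.inl hA)
  rcases List.eq_nil_or_concat L with rfl | ⟨K, U, rfl⟩
  · left
    refine ⟨rfl, ?_⟩
    obtain ⟨i, A, hA, hc⟩ := (h2 cmin).1 ⟨le_rfl, h⟩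
    rcases (snoc_get _ _ _ _).1 hA with hA' | ⟨rfl, rfl⟩
    · simp at hA'
    · have := (Finset.mem_Icc.1 hc).1
      omega
  · right
    simp only [List.concat_eq_append] at *
    have hU : (K ++ [U])[K.length]? = some U := by simp
    have hlen : (K ++ [U]).length = K.length + 1 := by simp
    obtain ⟨e, b, heb, rfl⟩ := h1 _ _ (hinc _ _ hU)
    set L := K ++ [Finset.Icc e b] with hL
    have hb := (h2 b).2 ⟨_, _, hinc _ _ hU, by simp [heb]⟩
    have hba : b ≤ a := h3 _ _ _ _ (hinc _ _ hU) hT (by omega) b (by simp [heb]) a (by simp [han])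
    have hle : ∀ (i : ℕ) (A : Finset ℕ), L[i]? = some A → ∀ c ∈ A, c ≤ b := by
      intro i A hA c hc
      rcases (snoc_get _ _ _ _).1 hA with hA' | ⟨rfl, rfl⟩
      · exact h3 _ _ _ _ (hinc _ _ hA) (hinc _ _ hU) (lt_of_get hA') c hc b (by simp [heb])
      · exact (Finset.mem_Icc.1 hc).2
    refine ⟨b, hb.1, ?_, ?_⟩
    · rw [valid_iff]
      refine ⟨fun i A hA => h1 i A (hinc _ _ hA), ?_,
        fun i j A B hA hB => h3 i j A B (hinc _ _ hA) (hinc _ _ hB),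
        fun i j A B hA hB => h4 i j A B (hinc _ _ hA) (hinc _ _ hB), ?_⟩
      · intro c
        constructor
        · rintro ⟨hc1, hc2⟩
          obtain ⟨i, A, hA, hc⟩ := (h2 c).1 ⟨hc1, hc2.trans hb.2⟩
          rcases (snoc_get _ _ _ _).1 hA with hA' | ⟨rfl, rfl⟩
          · exact ⟨i, A, hA', hc⟩
          · have := (Finset.mem_Icc.1 hc).1
            have hcb : c = b := by omega
            subst hcb
            exact ⟨_, _, hU, by simp [heb]⟩
        · rintro ⟨i, A, hA, hc⟩
          exact ⟨((h2 c).2 ⟨i, A, hinc _ _ hA, hc⟩).1, hle _ _ hA c hc⟩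
      · intro i B hB hi hcard c hc hx hm
        obtain ⟨j, A, hA, hj, hcA⟩ := h5 i B (hinc _ _ hB) hi hcard c hc hx hm
        have := lt_of_get hB
        rcases (snoc_get _ _ _ _).1 hA with hA' | ⟨rfl, rfl⟩
        · exact ⟨j, A, hA', hj, hcA⟩
        · omega
    · rcases eq_or_lt_of_le hba with hab | hab
      · right
        subst hab
        obtain ⟨_, hc, hm⟩ := h4 _ _ _ _ (hinc _ _ hU) hT (by omega) b (by simp [heb]) (by simp [han])
        rw [Nat.card_Icc] at hc
        exact ⟨rfl, by omega, hm⟩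
      · left
        have hab1 : a = b + 1 := by
          obtain ⟨i, A, hA, hc⟩ := (h2 (b+1)).1 ⟨by omega, by omega⟩
          rcases (snoc_get _ _ _ _).1 hA with hA' | ⟨rfl, rfl⟩
          · have := hle _ _ hA' _ hc
            omega
          · have := (Finset.mem_Icc.1 hc).1
            omega
        refine ⟨hab1, ?_⟩
        by_contra hcon
        push Not at hcon
        obtain ⟨j, A, hA, hj, hcA⟩ := h5 _ _ hT (by omega) (by rw [Nat.card_Icc]; omega) a
          (by simp [han]) (by intro x hx; exact (Finset.mem_Icc.1 hx).1) hcon.2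
        rcases (snoc_get _ _ _ _).1 hA with hA' | ⟨rfl, rfl⟩
        · have := hle _ _ hA' _ hcA
          omega
        · omega

theorem valid_snoc_bwd {cmin n : ℕ} {M : ℕ → ℕ} {L : List (Finset ℕ)} {a : ℕ}
    (h : cmin ≤ n) (han : a ≤ n) (hP : PP cmin M L a n) :
    IsValidTuple cmin n M (L ++ [Finset.Icc a n]) := by
  rcases hP with ⟨rfl, rfl⟩ | ⟨b, hb, hV, hs⟩
  · exact valid_single _ _ _ h
  · have hne := valid_ne_nil hb hV
    rcases List.eq_nil_or_concat L with rfl | ⟨K, U, rfl⟩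
    · exact absurd rfl hne
    simp only [List.concat_eq_append] at *
    obtain ⟨e, heb, hce, rfl⟩ := valid_last hb hV
    have hU : (K ++ [Finset.Icc e b])[K.length]? = some (Finset.Icc e b) := by simp
    have hlen : (K ++ [Finset.Icc e b]).length = K.length + 1 := by simp
    have hK : ∀ i A, (K ++ [Finset.Icc e b])[i]? = some A → i < K.length ∨
      (i = K.length ∧ A = Finset.Icc e b) := by
      intro i A hA
      rcases (snoc_get _ _ _ _).1 hA with hA' | hh
      · exact Or.inl (lt_of_get hA')
      · exact Or.inr hh
    set L := K ++ [Finset.Icc e b] with hL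
    rw [valid_iff] at hV ⊢
    obtain ⟨h1, h2, h3, h4, h5⟩ := hV
    simp only [snoc_get]
    refine ⟨?_, ?_, ?_, ?_, ?_⟩
    · rintro i A (hA | ⟨rfl, rfl⟩)
      · exact h1 i A hA
      · exact ⟨_, _, han, rfl⟩
    · intro c
      constructor
      · rintro ⟨hc1, hc2⟩
        by_cases hcb : c ≤ b
        · obtain ⟨i, A, hA, hc⟩ := (h2 c).1 ⟨hc1, hcb⟩
          exact ⟨i, A, Or.inl hA, hc⟩
        · exact ⟨_, _, Or.inr ⟨rfl, rfl⟩, by rw [Finset.mem_Icc]; omega⟩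
      · rintro ⟨i, A, hA | ⟨rfl, rfl⟩, hc⟩
        · have := (h2 c).2 ⟨i, A, hA, hc⟩
          omega
        · rw [Finset.mem_Icc] at hc; omega
    · rintro i j A B (hA | ⟨rfl, rfl⟩) (hB | ⟨rfl, rfl⟩) hij s hs' t ht
      · exact h3 i j A B hA hB hij s hs' t ht
      · have := (h2 s).2 ⟨i, A, hA, hs'⟩
        rw [Finset.mem_Icc] at ht
        omega
      · have := lt_of_get hB
        omega
      · omega
    · rintro i j A B (hA | ⟨rfl, rfl⟩) (hB | ⟨rfl, rfl⟩) hij c hcA hcB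
      · exact h4 i j A B hA hB hij c hcA hcB
      · have h6 := (h2 c).2 ⟨i, A, hA, hcA⟩
        rw [Finset.mem_Icc] at hcB
        have hcb : c = b := by omega
        subst hcb
        refine ⟨?_, ?_, by omega⟩
        · rcases hK i A hA with h7 | h7
          · exfalso
            have h8 := h3 _ _ _ _ hA hU h7 c hcA e (by simp [heb])
            have h9 := (h4 _ _ _ _ hA hU h7 c hcA (by simp [heb])).2.1
            rw [Nat.card_Icc] at h9
            omega
          · omega
        · rw [Nat.card_Icc]; omega
      · have := lt_of_get hB
        omega
      · omega
    · rintro i B (hB | ⟨rfl, rfl⟩) hi hcard c hc hx hm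
      · obtain ⟨j, A, hA, hj⟩ := h5 i B hB hi hcard c hc hx hm
        exact ⟨j, A, Or.inl hA, hj⟩
      · rw [Nat.card_Icc] at hcard
        have h6 := hx a (by simp [han])
        rw [Finset.mem_Icc] at hc
        have h7 : c = a := by omega
        subst h7
        have h8 : c = b := by omega
        subst h8
        exact ⟨_, _, Or.inl hU, by omega, by simp [heb]⟩

def XX (cmin : ℕ) (M : ℕ → ℕ) (n : ℕ) : Set (List (Finset ℕ) × ℕ) :=
  {x | x.2 ≤ n ∧ PP cmin M x.1 x.2 n}

def VV (cmin : ℕ) (M : ℕ → ℕ) (n : ℕ) : Set (List (Finset ℕ)) :=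
  {S | IsValidTuple cmin n M S}

theorem VV_eq (cmin n : ℕ) (M : ℕ → ℕ) (h : cmin ≤ n) :
    VV cmin M n = (fun x : List (Finset ℕ) × ℕ => x.1 ++ [Finset.Icc x.2 n]) '' XX cmin M n := by
  ext S
  constructor
  · intro hS
    rcases List.eq_nil_or_concat S with rfl | ⟨L, T, rfl⟩
    · exact absurd rfl (valid_ne_nil h hS)
    simp only [List.concat_eq_append] at *
    obtain ⟨a, han, rfl, hP⟩ := valid_snoc_fwd h hS
    exact ⟨(L, a), ⟨han, hP⟩, rfl⟩
  · rintro ⟨⟨L, a⟩, ⟨han, hP⟩, rfl⟩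
    exact valid_snoc_bwd h han hP

theorem inj_XX (cmin n : ℕ) (M : ℕ → ℕ) :
    Set.InjOn (fun x : List (Finset ℕ) × ℕ => x.1 ++ [Finset.Icc x.2 n]) (XX cmin M n) := by
  rintro ⟨L, a⟩ ⟨ha, -⟩ ⟨L', a'⟩ ⟨ha', -⟩ hh
  simp only at hh ha ha'
  obtain ⟨h1, h2⟩ := List.append_inj' hh rfl
  simp only [List.cons.injEq, and_true] at h2
  have h3 : a ∈ Finset.Icc a' n := by rw [← h2]; simp [ha]
  have h4 : a' ∈ Finset.Icc a n := by rw [h2]; simp [ha']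
  rw [Finset.mem_Icc] at h3 h4
  rw [h1, show a = a' by omega]

theorem VV_fin (cmin : ℕ) (M : ℕ → ℕ) (n : ℕ) : cmin ≤ n → (VV cmin M n).Finite := by
  induction n using Nat.strong_induction_on with
  | _ n ih =>
    intro h
    rw [VV_eq _ _ _ h]
    apply Set.Finite.image
    have hf : ((({[]} : Set (List (Finset ℕ))) ∪ ⋃ b ∈ Set.Ico cmin n, VV cmin M b) ×ˢ
        Set.Iic n).Finite := by
      apply Set.Finite.prod _ (Set.finite_Iic n)
      apply (Set.finite_singleton _).union
      apply Set.Finite.biUnion (Set.finite_Ico _ _)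
      intro b hb
      exact ih b hb.2 hb.1
    apply hf.subset
    rintro ⟨L, a⟩ ⟨ha, hP⟩
    refine ⟨?_, ha⟩
    rcases hP with ⟨h1, h2⟩ | ⟨b, hb, hV, hs⟩
    · left; exact h1
    · right
      simp only at ha hs
      exact Set.mem_biUnion (show b ∈ Set.Ico cmin n from ⟨hb, by omega⟩) hV

theorem XX_fin (cmin : ℕ) (M : ℕ → ℕ) (n : ℕ) (h : cmin ≤ n) : (XX cmin M n).Finite := by
  have := VV_fin cmin M n h
  rw [VV_eq _ _ _ h] at this
  exact this.of_finite_image (inj_XX _ _ _)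

theorem numValid_eq (cmin : ℕ) (M : ℕ → ℕ) (n : ℕ) (h : cmin ≤ n) :
    numValid cmin n M = (XX cmin M n).ncard := by
  rw [← Set.ncard_image_of_injOn (inj_XX cmin n M), ← VV_eq _ _ _ h]
  rfl

def YY (cmin : ℕ) (M : ℕ → ℕ) (p : ℕ) : Set (List (Finset ℕ) × ℕ) :=
  {x | x.2 < p ∧ PP cmin M x.1 x.2 p}

theorem XX_top (cmin : ℕ) (M : ℕ → ℕ) (n : ℕ) (h : cmin ≤ n) :
    (XX cmin M n).ncard = (YY cmin M n).ncard + {L | PP cmin M L n n}.ncard := by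
  have h1 : XX cmin M n = YY cmin M n ∪ (fun L => (L, n)) '' {L | PP cmin M L n n} := by
    ext ⟨L, a⟩
    simp only [XX, YY, Set.mem_setOf_eq, Set.mem_union, Set.mem_image, Prod.mk.injEq]
    constructor
    · rintro ⟨ha, hP⟩
      rcases eq_or_lt_of_le ha with rfl | ha
      · right; exact ⟨L, hP, rfl, rfl⟩
      · left; exact ⟨ha, hP⟩
    · rintro (⟨ha, hP⟩ | ⟨L, hP, rfl, rfl⟩)
      · exact ⟨ha.le, hP⟩
      · exact ⟨le_rfl, hP⟩
  have hf := XX_fin cmin M n h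
  rw [h1] at hf ⊢
  rw [Set.finite_union] at hf
  rw [Set.ncard_union_eq _ hf.1 hf.2, Set.ncard_image_of_injective]
  · intro x y hxy; simpa using hxy
  · rw [Set.disjoint_left]
    rintro _ ⟨hx, -⟩ ⟨L, -, rfl⟩
    simp at hx

theorem YY_succ (cmin : ℕ) (M : ℕ → ℕ) (p : ℕ) (h : cmin ≤ p) :
    (YY cmin M (p+1)).ncard = (YY cmin M p).ncard + {L | PP cmin M L p (p+1)}.ncard := by
  have h1 : YY cmin M (p+1) = YY cmin M p ∪ (fun L => (L, p)) '' {L | PP cmin M L p (p+1)} := by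
    ext ⟨L, a⟩
    simp only [YY, Set.mem_setOf_eq, Set.mem_union, Set.mem_image, Prod.mk.injEq]
    have key : a < p → (PP cmin M L a (p+1) ↔ PP cmin M L a p) := by
      intro ha
      unfold PP
      refine or_congr Iff.rfl (exists_congr fun b => and_congr Iff.rfl (and_congr Iff.rfl ?_))
      omega
    constructor
    · rintro ⟨ha, hP⟩
      rcases eq_or_lt_of_le (Nat.lt_succ_iff.1 ha) with rfl | ha
      · right; exact ⟨L, hP, rfl, rfl⟩
      · left; exact ⟨ha, (key ha).1 hP⟩
    · rintro (⟨ha, hP⟩ | ⟨L, hP, rfl, rfl⟩)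
      · exact ⟨by omega, (key ha).2 hP⟩
      · exact ⟨by omega, hP⟩
  have hf : (YY cmin M (p+1)).Finite :=
    (XX_fin cmin M (p+1) (by omega)).subset fun x hx => ⟨hx.1.le, hx.2⟩
  rw [h1] at hf ⊢
  rw [Set.finite_union] at hf
  rw [Set.ncard_union_eq _ hf.1 hf.2, Set.ncard_image_of_injective]
  · intro x y hxy; simpa using hxy
  · rw [Set.disjoint_left]
    rintro _ ⟨hx, -⟩ ⟨L, -, rfl⟩
    simp at hx

theorem PP_top (cmin : ℕ) (M : ℕ → ℕ) (p : ℕ) (h : cmin ≤ p) :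
    {L | PP cmin M L (p+1) (p+1)}.ncard = numValid cmin p M := by
  unfold numValid
  congr 1
  ext L
  constructor
  · rintro (⟨h1, h2⟩ | ⟨b, hb, hV, hs⟩)
    · omega
    · have : b = p := by omega
      subst this
      exact hV
  · intro hV
    exact Or.inr ⟨p, h, hV, by omega⟩

theorem PP_mid_one (cmin : ℕ) (M : ℕ → ℕ) (p : ℕ) (hm : M p = 1) :
    {L | PP cmin M L p (p+1)} = {L | PP cmin M L p p} := by
  ext L
  refine or_congr Iff.rfl (exists_congr fun b => and_congr Iff.rfl (and_congr Iff.rfl ?_))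
  constructor
  · rintro (h | ⟨rfl, h⟩) <;> omega
  · rintro (h | ⟨rfl, h⟩) <;> omega

theorem PP_mid_big (cmin : ℕ) (M : ℕ → ℕ) (p : ℕ) (h : cmin < p) (hm : 1 < M p) :
    {L | PP cmin M L p (p+1)}.ncard = numValid cmin p M := by
  unfold numValid
  congr 1
  ext L
  constructor
  · rintro (⟨h1, h2⟩ | ⟨b, hb, hV, hs⟩)
    · omega
    · have : b = p := by omega
      subst this
      exact hV
  · intro hV
    exact Or.inr ⟨p, h.le, hV, by omega⟩

/-- The recursion for the number of valid tuples (the combinatorial form of the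
count of local Arthur packets containing a tempered block not starting at zero):
if `m_{cmax-1} = 1` then `N(M) = 2·N(M')`, and if `m_{cmax-1} ≥ 3` and
`cmax ≥ cmin + 2` then `N(M) = 3·N(M') − N(M'')`. -/
theorem numValid_recursion (cmin cmax : ℕ) (M : ℕ → ℕ)
    (hlt : cmin < cmax) (hM : IsBlockTuple cmin cmax M) :
    (M (cmax - 1) = 1 →
      numValid cmin cmax M = 2 * numValid cmin (cmax - 1) M) ∧
    (3 ≤ M (cmax - 1) → cmin + 2 ≤ cmax →
      (numValid cmin cmax M : ℤ) =
        3 * (numValid cmin (cmax - 1) M : ℤ) - (numValid cmin (cmax - 2) M : ℤ)) := by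
  obtain ⟨p, rfl⟩ : ∃ p, cmax = p + 1 := ⟨cmax - 1, by omega⟩
  have hp : cmin ≤ p := by omega
  have e1 := numValid_eq cmin M (p+1) (by omega)
  rw [XX_top _ _ _ (by omega), YY_succ _ _ _ hp, PP_top _ _ _ hp] at e1
  have e2 := numValid_eq cmin M p hp
  rw [XX_top _ _ _ hp] at e2
  simp only [Nat.add_sub_cancel]
  constructor
  · intro hm
    rw [PP_mid_one _ _ _ hm] at e1
    omega
  · intro hm h2
    rw [PP_mid_big _ _ _ (by omega) (by omega)] at e1
    obtain ⟨q, rfl⟩ : ∃ q, p = q + 1 := ⟨p - 1, by omega⟩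
    rw [PP_top _ _ _ (by omega)] at e2
    have : q + 1 + 1 - 2 = q := by omega
    rw [this]
    omega
end

section
/- Fix integers 0 ≤ c_min < c_max and a block-tuple M = (m_{c_min}, …, m_{c_max}). The map (S_1, …, S_k) ↦ (S_1, …, S_{k−1}) is a bijection from the set of valid tuples S for M whose last set satisfies S_k = {c_max} onto the set of valid tuples for M'; its inverse appends the singleton {c_max} as a new last set. -/
lemma valid_append_iff (cmin cmax : ℕ) (M : ℕ → ℕ) (hlt : cmin < cmax) (T : List (Finset ℕ)) :
    IsValidTuple cmin cmax M (T ++ [({cmax} : Finset ℕ)]) ↔ IsValidTuple cmin (cmax - 1) M T := by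
  have hl : (T ++ [({cmax} : Finset ℕ)]).length = T.length + 1 := by simp
  have hT : ∀ (i : ℕ) (h : i < T.length) (hh : i < (T ++ [({cmax} : Finset ℕ)]).length),
      (T ++ [({cmax} : Finset ℕ)])[i]'hh = T[i] := fun i h hh => List.getElem_append_left h
  have hc : ∀ (hh : T.length < (T ++ [({cmax} : Finset ℕ)]).length),
      (T ++ [({cmax} : Finset ℕ)])[T.length]'hh = {cmax} := by simp
  unfold IsValidTuple
  simp only [Fin.forall_iff, Fin.exists_iff, List.get_eq_getElem, Fin.mk_lt_mk, Finset.mem_Icc]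
  generalize (T ++ [({cmax} : Finset ℕ)]) = U at *
  constructor
  · rintro ⟨h1, h2, h3, h4, h5⟩
    refine ⟨?_, ?_, ?_, ?_, ?_⟩
    · intro i hi
      rw [← hT i hi (by omega)]
      exact h1 i (by omega)
    · intro c
      constructor
      · rintro ⟨ha, hb⟩
        obtain ⟨i, hi, hm⟩ := (h2 c).1 ⟨ha, by omega⟩
        rcases Nat.lt_or_ge i T.length with h | h
        · exact ⟨i, h, hT i h hi ▸ hm⟩
        · obtain rfl : i = T.length := by omega
          rw [hc, Finset.mem_singleton] at hm
          omega
      · rintro ⟨i, hi, hm⟩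
        rw [← hT i hi (by omega)] at hm
        have := (h2 c).2 ⟨i, by omega, hm⟩
        have hne : c ≠ cmax := by
          rintro rfl
          have := (h4 i (by omega) T.length (by omega) hi c hm (by rw [hc]; simp)).2.1
          rw [hc] at this
          simp at this
        omega
    · intro i hi j hj hij
      rw [← hT i hi (by omega), ← hT j hj (by omega)]
      exact h3 i (by omega) j (by omega) hij
    · intro i hi j hj hij
      rw [← hT i hi (by omega), ← hT j hj (by omega)]
      exact h4 i (by omega) j (by omega) hij
    · intro i hi h0
      rw [← hT i hi (by omega)]
      intro hcard c hm hmin hMc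
      obtain ⟨j, hj, hji, hm'⟩ := h5 i (by omega) h0 hcard c hm hmin hMc
      exact ⟨j, by omega, hji, hT j (by omega) hj ▸ hm'⟩
  · rintro ⟨h1, h2, h3, h4, h5⟩
    have hb : ∀ i (hi : i < T.length), ∀ c ∈ T[i], c < cmax := by
      intro i hi c hm
      have := (h2 c).2 ⟨i, hi, hm⟩
      omega
    refine ⟨?_, ?_, ?_, ?_, ?_⟩
    · intro i hi
      rcases Nat.lt_or_ge i T.length with h | h
      · rw [hT i h]; exact h1 i h
      · obtain rfl : i = T.length := by omega
        exact ⟨cmax, cmax, le_rfl, by rw [hc]; simp⟩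
    · intro c
      constructor
      · rintro ⟨ha, hb⟩
        by_cases hcc : c = cmax
        · exact ⟨T.length, by omega, by rw [hc]; simp [hcc]⟩
        · obtain ⟨i, hi, hm⟩ := (h2 c).1 ⟨ha, by omega⟩
          exact ⟨i, by omega, by rw [hT i hi]; exact hm⟩
      · rintro ⟨i, hi, hm⟩
        rcases Nat.lt_or_ge i T.length with h | h
        · rw [hT i h] at hm
          have := (h2 c).2 ⟨i, h, hm⟩
          omega
        · obtain rfl : i = T.length := by omega
          rw [hc, Finset.mem_singleton] at hm
          omega
    · intro i hi j hj hij s hs t ht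
      rw [hT i (by omega)] at hs
      rcases Nat.lt_or_ge j T.length with h | h
      · rw [hT j h] at ht
        exact h3 i (by omega) j h hij s hs t ht
      · obtain rfl : j = T.length := by omega
        rw [hc, Finset.mem_singleton] at ht
        have := hb i (by omega) s hs
        omega
    · intro i hi j hj hij c hs ht
      rw [hT i (by omega)] at hs
      rcases Nat.lt_or_ge j T.length with h | h
      · rw [hT j h] at ht ⊢
        exact h4 i (by omega) j h hij c hs ht
      · obtain rfl : j = T.length := by omega
        rw [hc, Finset.mem_singleton] at ht
        have := hb i (by omega) c hs
        omega
    · intro i hi h0 hcard c hm hmin hMc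
      rcases Nat.lt_or_ge i T.length with h | h
      · rw [hT i h] at hcard hm hmin
        obtain ⟨j, hj, hji, hm'⟩ := h5 i h h0 hcard c hm hmin hMc
        exact ⟨j, by omega, hji, by rw [hT j hj]; exact hm'⟩
      · obtain rfl : i = T.length := by omega
        rw [hc] at hcard
        simp at hcard

/-- Dropping the last set is a bijection from the valid tuples for `M` whose last
set is the singleton `{cmax}` onto the valid tuples for `M'`; its inverse appends
the singleton `{cmax}` as a new last set. -/
theorem bijOn_dropLast_lastSingleton (cmin cmax : ℕ) (M : ℕ → ℕ)
    (hlt : cmin < cmax) (hM : IsBlockTuple cmin cmax M) :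
    Set.BijOn (fun S : List (Finset ℕ) => S.dropLast)
      {S : List (Finset ℕ) |
        IsValidTuple cmin cmax M S ∧ S.getLast? = some ({cmax} : Finset ℕ)}
      {S' : List (Finset ℕ) | IsValidTuple cmin (cmax - 1) M S'} ∧
    Set.InvOn (fun S' : List (Finset ℕ) => S' ++ [({cmax} : Finset ℕ)])
      (fun S : List (Finset ℕ) => S.dropLast)
      {S : List (Finset ℕ) |
        IsValidTuple cmin cmax M S ∧ S.getLast? = some ({cmax} : Finset ℕ)}
      {S' : List (Finset ℕ) | IsValidTuple cmin (cmax - 1) M S'} := by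
  have key := valid_append_iff cmin cmax M hlt
  have hinv : Set.InvOn (fun S' : List (Finset ℕ) => S' ++ [({cmax} : Finset ℕ)])
      (fun S : List (Finset ℕ) => S.dropLast)
      {S : List (Finset ℕ) |
        IsValidTuple cmin cmax M S ∧ S.getLast? = some ({cmax} : Finset ℕ)}
      {S' : List (Finset ℕ) | IsValidTuple cmin (cmax - 1) M S'} := by
    constructor
    · rintro S ⟨-, hS⟩
      exact List.dropLast_append_getLast? _ hS
    · intro T _
      simp
  refine ⟨hinv.bijOn ?_ ?_, hinv⟩
  · rintro S ⟨hv, hS⟩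
    have h := List.dropLast_append_getLast? _ hS
    rw [← h] at hv
    exact (key _).1 hv
  · intro T hT
    exact ⟨(key T).2 hT, by simp⟩
end

section
/- Fix integers 0 ≤ c_min < c_max and a block-tuple M = (m_{c_min}, …, m_{c_max}) with m_{c_max−1} = 1. The map replacing the last set S_k by S_k ∖ {c_max} is a bijection from the set of valid tuples S = (S_1, …, S_k) for M with c_max ∈ S_k and |S_k| ≥ 2 onto the set of all valid tuples for M'; its inverse replaces the last set S'_k of a valid tuple for M' by S'_k ∪ {c_max}. -/
def PV (cmin cmax : ℕ) (M : ℕ → ℕ) (n : ℕ) (f : ℕ → Finset ℕ) : Prop :=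
  (∀ i ≤ n, ∃ a b : ℕ, a ≤ b ∧ f i = Finset.Icc a b) ∧
  (∀ c : ℕ, (cmin ≤ c ∧ c ≤ cmax) ↔ ∃ i ≤ n, c ∈ f i) ∧
  (∀ i j, i < j → j ≤ n → ∀ s ∈ f i, ∀ t ∈ f j, s ≤ t) ∧
  (∀ i j, i < j → j ≤ n → ∀ c : ℕ, c ∈ f i → c ∈ f j →
    j = i + 1 ∧ 2 ≤ (f j).card ∧ 1 < M c) ∧
  (∀ i, i + 1 ≤ n → 2 ≤ (f (i+1)).card →
    ∀ c : ℕ, c ∈ f (i+1) → (∀ x ∈ f (i+1), c ≤ x) → 1 < M c → c ∈ f i)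

theorem pv_iff (cmin cmax : ℕ) (M : ℕ → ℕ) (S : List (Finset ℕ)) (n : ℕ) (f : ℕ → Finset ℕ)
    (hn : S.length = n + 1) (hf : ∀ i (h : i < S.length), S[i] = f i) :
    IsValidTuple cmin cmax M S ↔ PV cmin cmax M n f := by
  unfold IsValidTuple PV
  simp only [List.get_eq_getElem, hf, Fin.forall_iff, Fin.exists_iff, Fin.mk_lt_mk,
    Finset.mem_Icc, hn, Nat.lt_succ_iff]
  refine and_congr Iff.rfl (and_congr ?_ (and_congr ?_ (and_congr ?_ ?_)))
  · simp only [exists_prop]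
  · exact ⟨fun h i j hij hj => h i (by omega) j hj hij, fun h i _ j hj hij => h i j hij hj⟩
  · exact ⟨fun h i j hij hj => h i (by omega) j hj hij, fun h i _ j hj hij => h i j hij hj⟩
  · constructor
    · intro h i hi hc c h1 h2 h3
      obtain ⟨j, hj, hji, hcj⟩ := h (i+1) hi (by omega) hc c h1 h2 h3
      obtain rfl : j = i := by omega
      exact hcj
    · intro h i hi hi1 hc c h1 h2 h3
      obtain ⟨i, rfl⟩ : ∃ k, i = k + 1 := ⟨i - 1, by omega⟩
      exact ⟨i, by omega, rfl, h i hi hc c h1 h2 h3⟩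

theorem pv_forward (cmin d : ℕ) (M : ℕ → ℕ) (n : ℕ) (f g : ℕ → Finset ℕ)
    (h1 : M d = 1) (hfg : ∀ i < n, g i = f i)
    (hg : g n = f n \ {d + 1}) (hm : d + 1 ∈ f n) (hc : 2 ≤ (f n).card)
    (H : PV cmin (d + 1) M n f) : PV cmin d M n g := by
  obtain ⟨H1, H2, H3, H4, H5⟩ := H
  obtain ⟨a, b, hab, hfn⟩ := H1 n le_rfl
  have hb : b = d + 1 := by
    have h := (H2 b).2 ⟨n, le_rfl, by rw [hfn]; simp [hab]⟩
    rw [hfn] at hm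
    have := (Finset.mem_Icc.1 hm).2
    omega
  subst hb
  have had : a ≤ d := by
    rw [hfn, Nat.card_Icc] at hc; omega
  have hgn : g n = Finset.Icc a d := by
    rw [hg, hfn]; ext x; simp; omega
  have hno : ∀ i < n, d + 1 ∉ f i := by
    intro i hi hx
    have := H3 i n hi le_rfl _ hx a (by rw [hfn]; simp; omega)
    omega
  have hfm : ∀ x, x ∈ f n ↔ a ≤ x ∧ x ≤ d + 1 := by intro x; rw [hfn, Finset.mem_Icc]
  have hgm : ∀ x, x ∈ g n ↔ a ≤ x ∧ x ≤ d := by intro x; rw [hgn, Finset.mem_Icc]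
  have hgc : (g n).card = d + 1 - a := by rw [hgn, Nat.card_Icc]
  have hsub : ∀ i ≤ n, ∀ x ∈ g i, x ∈ f i := by
    intro i hi x hx
    rcases hi.lt_or_eq with h | rfl
    · rwa [hfg i h] at hx
    · rw [hfm]; rw [hgm] at hx; omega
  refine ⟨?_, ?_, ?_, ?_, ?_⟩
  · intro i hi
    rcases hi.lt_or_eq with h | rfl
    · rw [hfg i h]; exact H1 i hi
    · exact ⟨a, d, had, hgn⟩
  · intro c
    constructor
    · rintro ⟨hc1, hc2⟩
      obtain ⟨i, hi, hx⟩ := (H2 c).1 ⟨hc1, by omega⟩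
      refine ⟨i, hi, ?_⟩
      rcases hi.lt_or_eq with h | rfl
      · rwa [hfg i h]
      · rw [hgm]; rw [hfm] at hx; omega
    · rintro ⟨i, hi, hx⟩
      have h2 := (H2 c).2 ⟨i, hi, hsub i hi c hx⟩
      refine ⟨h2.1, ?_⟩
      have : c ≠ d + 1 := by
        rintro rfl
        rcases hi.lt_or_eq with h | rfl
        · exact hno i h (hsub i hi _ hx)
        · rw [hgm] at hx; omega
      omega
  · intro i j hij hj s hs t ht
    exact H3 i j hij hj s (hsub i (by omega) s hs) t (hsub j hj t ht)
  · intro i j hij hj c hci hcj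
    obtain ⟨e1, e2, e3⟩ := H4 i j hij hj c (hsub i (by omega) c hci) (hsub j hj c hcj)
    refine ⟨e1, ?_, e3⟩
    rcases hj.lt_or_eq with h | rfl
    · rwa [hfg j h]
    · rw [hgc]
      rw [hgm] at hcj
      have : c ≠ d := by rintro rfl; omega
      omega
  · intro i hi hcd c hci hmin hMc
    rw [hfg i (by omega)]
    rcases hi.lt_or_eq with h | rfl
    · rw [hfg _ h] at hcd hci hmin
      exact H5 i hi hcd c hci hmin hMc
    · refine H5 i hi hc c (hsub _ hi c hci) ?_ hMc
      intro x hx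
      have := hmin a (by rw [hgm]; omega)
      rw [hfm] at hx; omega

theorem pv_last (cmin d : ℕ) (M : ℕ → ℕ) (n : ℕ) (g : ℕ → Finset ℕ) (hd : cmin ≤ d)
    (H : PV cmin d M n g) : ∃ a ≤ d, g n = Finset.Icc a d := by
  obtain ⟨H1, H2, H3, H4, H5⟩ := H
  obtain ⟨a, b, hab, hgn⟩ := H1 n le_rfl
  have hb := (H2 b).2 ⟨n, le_rfl, by rw [hgn]; simp [hab]⟩
  obtain ⟨i, hi, hx⟩ := (H2 d).1 ⟨hd, le_rfl⟩
  have hbd : b = d := by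
    rcases hi.lt_or_eq with h | rfl
    · have := H3 i n h le_rfl d hx b (by rw [hgn]; simp [hab])
      omega
    · rw [hgn, Finset.mem_Icc] at hx; omega
  subst hbd
  exact ⟨a, hab, hgn⟩

theorem pv_backward (cmin d : ℕ) (M : ℕ → ℕ) (n : ℕ) (f g : ℕ → Finset ℕ) (hd : cmin ≤ d)
    (h1 : M d = 1) (hfg : ∀ i < n, f i = g i)
    (hf : f n = g n ∪ {d + 1})
    (H : PV cmin d M n g) : PV cmin (d + 1) M n f ∧ 2 ≤ (f n).card := by
  obtain ⟨a, had, hgn⟩ := pv_last cmin d M n g hd H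
  obtain ⟨H1, H2, H3, H4, H5⟩ := H
  have hfn : f n = Finset.Icc a (d + 1) := by
    rw [hf, hgn]; ext x; simp; omega
  have hfm : ∀ x, x ∈ f n ↔ a ≤ x ∧ x ≤ d + 1 := by intro x; rw [hfn, Finset.mem_Icc]
  have hgm : ∀ x, x ∈ g n ↔ a ≤ x ∧ x ≤ d := by intro x; rw [hgn, Finset.mem_Icc]
  have hgc : (g n).card = d + 1 - a := by rw [hgn, Nat.card_Icc]
  have hfc : 2 ≤ (f n).card := by rw [hfn, Nat.card_Icc]; omega
  have hsub : ∀ i ≤ n, ∀ x ∈ g i, x ∈ f i := by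
    intro i hi x hx
    rcases hi.lt_or_eq with h | rfl
    · rwa [hfg i h]
    · rw [hfm]; rw [hgm] at hx; omega
  have hle : ∀ i ≤ n, ∀ x ∈ g i, x ≤ d := fun i hi x hx => ((H2 x).2 ⟨i, hi, hx⟩).2
  have hac := (H2 a).2 ⟨n, le_rfl, by rw [hgm]; omega⟩
  refine ⟨⟨?_, ?_, ?_, ?_, ?_⟩, hfc⟩
  · intro i hi
    rcases hi.lt_or_eq with h | rfl
    · rw [hfg i h]; exact H1 i hi
    · exact ⟨a, d + 1, by omega, hfn⟩
  · intro c
    constructor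
    · rintro ⟨hc1, hc2⟩
      by_cases hcd : c = d + 1
      · exact ⟨n, le_rfl, by rw [hfm]; omega⟩
      · obtain ⟨i, hi, hx⟩ := (H2 c).1 ⟨hc1, by omega⟩
        exact ⟨i, hi, hsub i hi c hx⟩
    · rintro ⟨i, hi, hx⟩
      rcases hi.lt_or_eq with h | rfl
      · rw [hfg i h] at hx
        have := (H2 c).2 ⟨i, hi, hx⟩
        omega
      · rw [hfm] at hx; omega
  · intro i j hij hj s hs t ht
    rw [hfg i (by omega)] at hs
    rcases hj.lt_or_eq with h | rfl
    · rw [hfg j h] at ht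
      exact H3 i j hij hj s hs t ht
    · rw [hfm] at ht
      have h2 := hle i (by omega) s hs
      by_cases e : t = d + 1
      · omega
      · exact H3 i j hij hj s hs t (by rw [hgm]; omega)
  · intro i j hij hj c hci hcj
    rw [hfg i (by omega)] at hci
    rcases hj.lt_or_eq with h | rfl
    · rw [hfg j h] at hcj ⊢
      exact H4 i j hij hj c hci hcj
    · have h2 := hle i (by omega) c hci
      rw [hfm] at hcj
      have h3 := H4 i j hij hj c hci (by rw [hgm]; omega)
      exact ⟨h3.1, hfc, h3.2.2⟩
  · intro i hi hcd c hci hmin hMc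
    rw [hfg i (by omega)]
    rcases hi.lt_or_eq with h | rfl
    · rw [hfg _ h] at hcd hci hmin
      exact H5 i hi hcd c hci hmin hMc
    · have h2 := hmin a (by rw [hfm]; omega)
      rw [hfm] at hci
      have hca : c = a := by omega
      have hne : c ≠ d := by rintro rfl; omega
      refine H5 i hi (by rw [hgc]; omega) c (by rw [hgm]; omega) ?_ hMc
      intro x hx
      rw [hgm] at hx; omega

theorem pv_snoc (cmin cmax : ℕ) (M : ℕ → ℕ) (l : List (Finset ℕ)) (L : Finset ℕ) :
    IsValidTuple cmin cmax M (l ++ [L]) ↔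
      PV cmin cmax M l.length (fun i => if i < l.length then l.getD i ∅ else L) := by
  apply pv_iff
  · simp
  · intro i h
    by_cases hi : i < l.length
    · simp [hi, List.getElem_append]
    · simp [hi, List.getElem_append]

theorem snoc_cases (S : List (Finset ℕ)) : S = [] ∨ ∃ l L, S = l ++ [L] := by
  rcases List.eq_nil_or_concat S with h | ⟨l, L, h⟩
  · exact Or.inl h
  · exact Or.inr ⟨l, L, by simpa using h⟩

theorem not_valid_nil (cmin cmax : ℕ) (M : ℕ → ℕ) (h : cmin ≤ cmax) :
    ¬ IsValidTuple cmin cmax M [] := by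
  rintro ⟨_, H2, _⟩
  obtain ⟨i, _⟩ := (H2 cmin).1 (by simp [h])
  exact absurd i.2 (by simp)

/-- Suppose `m_{cmax-1} = 1`. Replacing the last set `S_k` by `S_k \ {cmax}` is a
bijection from the valid tuples for `M` with `cmax ∈ S_k` and `|S_k| ≥ 2` onto the
set of all valid tuples for `M'`; its inverse replaces the last set `S'_k` of a
valid tuple for `M'` by `S'_k ∪ {cmax}`. -/
theorem bijOn_removeLastElement (cmin cmax : ℕ) (M : ℕ → ℕ)
    (hlt : cmin < cmax) (hM : IsBlockTuple cmin cmax M)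
    (h1 : M (cmax - 1) = 1) :
    Set.BijOn
      (fun S : List (Finset ℕ) => S.dropLast ++ [S.getLastD ∅ \ {cmax}])
      {S : List (Finset ℕ) | IsValidTuple cmin cmax M S ∧
        cmax ∈ S.getLastD ∅ ∧ 2 ≤ (S.getLastD ∅).card}
      {S' : List (Finset ℕ) | IsValidTuple cmin (cmax - 1) M S'} ∧
    Set.InvOn
      (fun S' : List (Finset ℕ) => S'.dropLast ++ [S'.getLastD ∅ ∪ {cmax}])
      (fun S : List (Finset ℕ) => S.dropLast ++ [S.getLastD ∅ \ {cmax}])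
      {S : List (Finset ℕ) | IsValidTuple cmin cmax M S ∧
        cmax ∈ S.getLastD ∅ ∧ 2 ≤ (S.getLastD ∅).card}
      {S' : List (Finset ℕ) | IsValidTuple cmin (cmax - 1) M S'} := by
  obtain ⟨d, rfl⟩ : ∃ d, cmax = d + 1 := ⟨cmax - 1, by omega⟩
  have hd : cmin ≤ d := by omega
  simp only [Nat.add_sub_cancel] at h1 ⊢
  have gl : ∀ (l : List (Finset ℕ)) L, (l ++ [L]).getLastD ∅ = L := by
    intro l L; simp [List.getLastD_eq_getLast?]
  have dl : ∀ (l : List (Finset ℕ)) (L : Finset ℕ), (l ++ [L]).dropLast = l := by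
    intro l L; simp
  have inv : Set.InvOn
      (fun S' : List (Finset ℕ) => S'.dropLast ++ [S'.getLastD ∅ ∪ {d + 1}])
      (fun S : List (Finset ℕ) => S.dropLast ++ [S.getLastD ∅ \ {d + 1}])
      {S : List (Finset ℕ) | IsValidTuple cmin (d + 1) M S ∧
        d + 1 ∈ S.getLastD ∅ ∧ 2 ≤ (S.getLastD ∅).card}
      {S' : List (Finset ℕ) | IsValidTuple cmin d M S'} := by
    constructor
    · rintro S ⟨hS, hm, hc⟩
      rcases snoc_cases S with rfl | ⟨l, L, rfl⟩
      · exact absurd hS (not_valid_nil _ _ _ (by omega))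
      · simp only [gl, dl] at hm ⊢
        rw [Finset.sdiff_union_of_subset (by simpa using hm)]
    · intro S hS
      rcases snoc_cases S with rfl | ⟨l, L, rfl⟩
      · exact absurd hS (not_valid_nil _ _ _ (by omega))
      · simp only [gl, dl, Set.mem_setOf_eq] at hS ⊢
        have hP := (pv_snoc _ _ _ _ _).1 hS
        obtain ⟨a, _, ha⟩ := pv_last _ _ _ _ _ hd hP
        simp only [lt_irrefl, if_false] at ha
        congr 2
        subst ha
        ext x; simp; omega
  refine ⟨inv.bijOn ?_ ?_, inv⟩
  · rintro S ⟨hS, hm, hc⟩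
    rcases snoc_cases S with rfl | ⟨l, L, rfl⟩
    · exact absurd hS (not_valid_nil _ _ _ (by omega))
    · simp only [gl, dl, Set.mem_setOf_eq] at hm hc ⊢
      rw [pv_snoc] at hS ⊢
      refine pv_forward _ _ _ _ _ _ h1 ?_ ?_ ?_ ?_ hS
      · intro i hi; simp [hi]
      · simp
      · simpa using hm
      · simpa using hc
  · intro S hS
    rcases snoc_cases S with rfl | ⟨l, L, rfl⟩
    · exact absurd hS (not_valid_nil _ _ _ (by omega))
    · simp only [gl, dl, Set.mem_setOf_eq] at hS ⊢
      rw [pv_snoc] at hS ⊢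
      have h := pv_backward cmin d M l.length
        (fun i => if i < l.length then l.getD i ∅ else L ∪ {d + 1}) _ hd h1
        (by intro i hi; simp [hi]) (by simp) hS
      exact ⟨h.1, by simp, by simpa using h.2⟩
end

section
/- Fix integers 0 ≤ c_min < c_max and a block-tuple M = (m_{c_min}, …, m_{c_max}) with m_{c_max−1} > 1. Every valid tuple S = (S_1, …, S_k) for M satisfies exactly one of the following three conditions: (i) S_k = {c_max}; (ii) c_max − 1 belongs to more than one of the sets S_i; (iii) c_max − 1 belongs to exactly one of the sets S_i, say S_{i_0}, and c_max ∈ S_{i_0}. -/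
/-- Suppose `m_{cmax-1} > 1`. Every valid tuple for `M` satisfies exactly one of:
(i) the last set is `{cmax}`; (ii) `cmax - 1` belongs to more than one of the
sets; (iii) `cmax - 1` belongs to exactly one of the sets, and that set also
contains `cmax`. -/
theorem validTuple_trichotomy (cmin cmax : ℕ) (M : ℕ → ℕ)
    (hlt : cmin < cmax) (hM : IsBlockTuple cmin cmax M)
    (h1 : 1 < M (cmax - 1))
    (S : List (Finset ℕ)) (hS : IsValidTuple cmin cmax M S) :
    let P1 : Prop := S.getLastD ∅ = ({cmax} : Finset ℕ)
    let P2 : Prop := ∃ i j : Fin S.length, i ≠ j ∧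
      cmax - 1 ∈ S.get i ∧ cmax - 1 ∈ S.get j
    let P3 : Prop := ∃ i0 : Fin S.length, cmax - 1 ∈ S.get i0 ∧ cmax ∈ S.get i0 ∧
      ∀ i : Fin S.length, cmax - 1 ∈ S.get i → i = i0
    (P1 ∧ ¬P2 ∧ ¬P3) ∨ (¬P1 ∧ P2 ∧ ¬P3) ∨ (¬P1 ∧ ¬P2 ∧ P3) := by
  obtain ⟨hI, hU, hO, hX, -⟩ := hS
  obtain ⟨p, hp⟩ := (hU (cmax - 1)).1 (by simp; omega)
  obtain ⟨q, hq⟩ := (hU cmax).1 (by simp; omega)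
  have hpos : 0 < S.length := p.pos
  obtain ⟨L, hL⟩ : ∃ L : Fin S.length, (L : ℕ) = S.length - 1 := ⟨⟨S.length - 1, by omega⟩, rfl⟩
  have hne : S ≠ [] := List.ne_nil_of_length_pos hpos
  have hlast : S.getLastD ∅ = S.get L := by
    rw [List.getLastD_eq_getLast?, List.getLast?_eq_some_getLast hne, Option.getD_some,
      List.getLast_eq_getElem]
    simp [hL]
  have hle : ∀ i : Fin S.length, ∀ x ∈ S.get i, x ≤ cmax := fun i x hx =>
    (Finset.mem_Icc.1 ((hU x).2 ⟨i, hx⟩)).2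
  have hlt' : ∀ i : Fin S.length, i ≠ L → i < L := by
    intro i hi
    have h2 := i.2
    have : (i : ℕ) ≠ L := fun h => hi (Fin.ext h)
    exact Fin.lt_def.2 (by omega)
  -- a set containing cmax, when the last set is a singleton, is the last one
  have key : S.get L = {cmax} → ∀ i : Fin S.length, cmax ∈ S.get i → i = L := by
    intro h i hi
    by_contra hn
    have := (hX i L (hlt' i hn) cmax hi (by rw [h]; simp)).2.1
    rw [h] at this
    simp at this
  have noP1P2 : S.get L = {cmax} → ∀ i j : Fin S.length, i < j → cmax - 1 ∈ S.get i →
      cmax - 1 ∈ S.get j → False := by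
    intro h i j hij hi hj
    have hc := (hX i j hij _ hi hj).2.1
    obtain ⟨x, hx, hxn⟩ := Finset.exists_mem_ne (s := S.get j) hc (cmax - 1)
    have h3 := hO i j hij _ hi x hx
    have h4 := hle j x hx
    have hxe : x = cmax := by omega
    subst hxe
    have := key h j hx
    subst this
    rw [h] at hj
    simp at hj
    omega
  intro P1 P2 P3
  have n12 : P1 → P2 → False := by
    rintro h ⟨i, j, hij, hi, hj⟩
    have h : S.get L = {cmax} := hlast ▸ h
    rcases lt_or_gt_of_ne hij with h' | h'
    · exact noP1P2 h i j h' hi hj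
    · exact noP1P2 h j i h' hj hi
  have n13 : P1 → P3 → False := by
    rintro h ⟨i, hi, hi', -⟩
    have h : S.get L = {cmax} := hlast ▸ h
    have := key h i hi'
    subst this
    rw [h] at hi
    simp at hi
    omega
  have n23 : P2 → P3 → False := by
    rintro ⟨i, j, hij, hi, hj⟩ ⟨k, -, -, hk⟩
    exact hij ((hk i hi).trans (hk j hj).symm)
  have ex : P1 ∨ P2 ∨ P3 := by
    by_cases h2 : P2
    · exact Or.inr (Or.inl h2)
    have huniq : ∀ i : Fin S.length, cmax - 1 ∈ S.get i → i = p := by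
      intro i hi
      by_contra hn
      exact h2 ⟨i, p, hn, hi, hp⟩
    by_cases hcp : cmax ∈ S.get p
    · exact Or.inr (Or.inr ⟨p, hp, hcp, huniq⟩)
    left
    have hqp : q ≠ p := fun h => hcp (h ▸ hq)
    have hpq : p < q := by
      rcases lt_or_gt_of_ne hqp with h | h
      · have := hO q p h _ hq _ hp
        omega
      · exact h
    have hsing : ∀ r : Fin S.length, p < r → S.get r = {cmax} := by
      intro r hr
      obtain ⟨a, b, hab, he⟩ := hI r
      have hall : ∀ x ∈ S.get r, x = cmax := by
        intro x hx
        have h3 := hO p r hr _ hp x hx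
        have h4 := hle r x hx
        by_contra hxn
        have : x = cmax - 1 := by omega
        subst this
        exact absurd (huniq r hx) hr.ne'
      refine Finset.eq_singleton_iff_unique_mem.2 ⟨?_, hall⟩
      have ha : a ∈ S.get r := by rw [he]; simp [hab]
      exact hall a ha ▸ ha
    have hpL : p < L := by
      have := q.2
      have := Fin.lt_def.1 hpq
      exact Fin.lt_def.2 (by omega)
    exact hlast.trans (hsing L hpL)
  clear_value P1 P2 P3
  rcases ex with h | h | h
  · exact Or.inl ⟨h, n12 h, n13 h⟩
  · exact Or.inr (Or.inl ⟨fun h' => n12 h' h, h, n23 h⟩)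
  · exact Or.inr (Or.inr ⟨fun h' => n13 h' h, fun h' => n23 h' h, h⟩)
end

section
/- Fix integers 0 ≤ c_min < c_max and a block-tuple M = (m_{c_min}, …, m_{c_max}) with m_{c_max−1} > 1. If S = (S_1, …, S_k) is a valid tuple for M in which c_max − 1 belongs to more than one of the sets S_i, then c_max − 1 belongs to exactly the two sets S_{k−1} and S_k, and S_k = {c_max − 1, c_max}. Moreover, the map S ↦ (S_1, …, S_{k−1}) is a bijection from the set of such valid tuples for M onto the set of all valid tuples for M'; its inverse appends the set {c_max − 1, c_max}. -/
/-- Index-free version of validity. -/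
def VN (a b : ℕ) (M : ℕ → ℕ) (n : ℕ) (f : ℕ → Finset ℕ) : Prop :=
  (∀ i < n, ∃ a b : ℕ, a ≤ b ∧ f i = Finset.Icc a b) ∧
  (∀ c : ℕ, (a ≤ c ∧ c ≤ b) ↔ ∃ i < n, c ∈ f i) ∧
  (∀ i j, i < j → j < n → ∀ s ∈ f i, ∀ t ∈ f j, s ≤ t) ∧
  (∀ i j, i < j → j < n → ∀ c : ℕ, c ∈ f i → c ∈ f j →
    j = i + 1 ∧ 2 ≤ (f j).card ∧ 1 < M c) ∧
  (∀ i < n, 1 ≤ i → 2 ≤ (f i).card →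
    ∀ c : ℕ, c ∈ f i → (∀ x ∈ f i, c ≤ x) → 1 < M c → c ∈ f (i - 1))

theorem get_eq_getD (S : List (Finset ℕ)) (i : Fin S.length) : S.get i = S.getD i ∅ := by
  simp

theorem valid_iff_s4 (a b : ℕ) (M : ℕ → ℕ) (S : List (Finset ℕ)) :
    IsValidTuple a b M S ↔ VN a b M S.length (fun i => S.getD i ∅) := by
  unfold IsValidTuple VN
  simp only [get_eq_getD, Fin.forall_iff, Fin.exists_iff, Finset.mem_Icc, Fin.lt_def]
  refine and_congr Iff.rfl (and_congr ?_ (and_congr ?_ (and_congr ?_ ?_)))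
  · simp only [exists_prop]
  · exact ⟨fun h i j hij hj => h i (hij.trans hj) j hj hij,
      fun h i _ j hj hij => h i j hij hj⟩
  · exact ⟨fun h i j hij hj => h i (hij.trans hj) j hj hij,
      fun h i _ j hj hij => h i j hij hj⟩
  · constructor
    · intro h i hi h1 h2 c hc hx hm
      obtain ⟨j, hj, hji, hcj⟩ := h i hi h1 h2 c hc hx hm
      have : i - 1 = j := by omega
      rw [this]; exact hcj
    · intro h i hi h1 h2 c hc hx hm
      exact ⟨i - 1, by omega, by omega, h i hi h1 h2 c hc hx hm⟩

theorem VN_congr {a b : ℕ} {M : ℕ → ℕ} {n : ℕ} {f g : ℕ → Finset ℕ}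
    (hfg : ∀ i < n, f i = g i) (h : VN a b M n f) : VN a b M n g := by
  obtain ⟨h1, h2, h3, h4, h5⟩ := h
  refine ⟨?_, ?_, ?_, ?_, ?_⟩
  · intro i hi; rw [← hfg i hi]; exact h1 i hi
  · intro c; rw [h2]
    exact exists_congr fun i => and_congr_right fun hi => by rw [hfg i hi]
  · intro i j hij hj; rw [← hfg i (hij.trans hj), ← hfg j hj]; exact h3 i j hij hj
  · intro i j hij hj; rw [← hfg i (hij.trans hj), ← hfg j hj]; exact h4 i j hij hj
  · intro i hi; rw [← hfg i hi, ← hfg (i-1) (by omega)]; exact h5 i hi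

theorem card_two {s : Finset ℕ} {a : ℕ} (h : 2 ≤ s.card) (hs : ∀ x ∈ s, a ≤ x ∧ x ≤ a + 1) :
    s = {a, a + 1} := by
  apply Finset.eq_of_subset_of_card_le
  · intro x hx
    have := hs x hx
    simp only [Finset.mem_insert, Finset.mem_singleton]; omega
  · exact (Finset.card_le_two).trans h

theorem card_one {s : Finset ℕ} {a : ℕ} (hs : ∀ x ∈ s, x = a) : s.card ≤ 1 := by
  rw [Finset.card_le_one]
  intro x hx y hy
  rw [hs x hx, hs y hy]

theorem nonempty_of {a b : ℕ} {M : ℕ → ℕ} {n : ℕ} {f : ℕ → Finset ℕ}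
    (h : VN a b M n f) {i : ℕ} (hi : i < n) : ∃ x, x ∈ f i := by
  obtain ⟨p, q, hpq, e⟩ := h.1 i hi
  exact ⟨p, by rw [e]; simp [hpq]⟩

/-- The top element lies only in the last set. -/
theorem top_last {a b : ℕ} {M : ℕ → ℕ} {n : ℕ} {f : ℕ → Finset ℕ}
    (h : VN a b M n f) {i : ℕ} (hi : i < n) (hb : b ∈ f i) : i + 1 = n := by
  by_contra hne
  have hlt : i < n - 1 := by omega
  have key : ∀ x ∈ f (n - 1), x = b := fun x hx =>
    le_antisymm ((h.2.1 x).2 ⟨n - 1, by omega, hx⟩).2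
      (h.2.2.1 i (n - 1) hlt (by omega) b hb x hx)
  obtain ⟨x, hx⟩ := nonempty_of h (show n - 1 < n by omega)
  have hx' := key x hx
  subst hx'
  have := (h.2.2.2.1 i (n - 1) hlt (by omega) x hb hx).2.1
  have := card_one key
  omega

theorem part1 {a d : ℕ} {M : ℕ → ℕ} {n : ℕ} {f : ℕ → Finset ℕ}
    (h : VN a (d + 1) M n f) {i j : ℕ} (hij : i < j) (hj : j < n)
    (hi1 : d ∈ f i) (hj1 : d ∈ f j) :
    n = i + 2 ∧ j = i + 1 ∧ f j = {d, d + 1} := by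
  obtain ⟨e, hc, -⟩ := h.2.2.2.1 i j hij hj d hi1 hj1
  have e2 : f j = {d, d + 1} := card_two hc fun x hx =>
    ⟨h.2.2.1 i j hij hj d hi1 x hx, ((h.2.1 x).2 ⟨j, hj, hx⟩).2⟩
  have := top_last h hj (by rw [e2]; simp)
  exact ⟨by omega, e, e2⟩

theorem part2 {a d : ℕ} {M : ℕ → ℕ} {n : ℕ} {f : ℕ → Finset ℕ}
    (h : VN a (d + 1) M (n + 2) f) (hd : d ∈ f n) (hl : f (n + 1) = {d, d + 1}) :
    VN a d M (n + 1) f := by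
  obtain ⟨h1, h2, h3, h4, h5⟩ := h
  refine ⟨fun i hi => h1 i (by omega), ?_, fun i j hij hj => h3 i j hij (by omega),
    fun i j hij hj => h4 i j hij (by omega), fun i hi => h5 i (by omega)⟩
  intro c
  constructor
  · rintro ⟨hc1, hc2⟩
    obtain ⟨i, hi, hci⟩ := (h2 c).1 ⟨hc1, by omega⟩
    by_cases hin : i = n + 1
    · subst hin
      rw [hl] at hci
      simp only [Finset.mem_insert, Finset.mem_singleton] at hci
      have : c = d := by omega
      exact ⟨n, by omega, this ▸ hd⟩
    · exact ⟨i, by omega, hci⟩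
  · rintro ⟨i, hi, hci⟩
    exact ⟨((h2 c).2 ⟨i, by omega, hci⟩).1,
      h3 i (n + 1) (by omega) (by omega) c hci d (by rw [hl]; simp)⟩

theorem part3 {a d : ℕ} {M : ℕ → ℕ} {n : ℕ} {f : ℕ → Finset ℕ} (had : a ≤ d) (hm : 1 < M d)
    (h : VN a d M n f) (hl : f n = {d, d + 1}) :
    VN a (d + 1) M (n + 1) f ∧ 1 ≤ n ∧ d ∈ f (n - 1) := by
  have hlast : 1 ≤ n ∧ d ∈ f (n - 1) := by
    obtain ⟨i, hi, hdi⟩ := (h.2.1 d).1 ⟨had, le_rfl⟩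
    have := top_last h hi hdi
    refine ⟨by omega, ?_⟩
    have e : n - 1 = i := by omega
    rw [e]; exact hdi
  refine ⟨?_, hlast⟩
  have htop := fun i hi hb => top_last h (i := i) hi hb
  obtain ⟨h1, h2, h3, h4, h5⟩ := h
  have hle : ∀ i < n, ∀ x ∈ f i, x ≤ d := fun i hi x hx => ((h2 x).2 ⟨i, hi, hx⟩).2
  have hmem : ∀ x, x ∈ f n ↔ x = d ∨ x = d + 1 := by intro x; rw [hl]; simp
  refine ⟨?_, ?_, ?_, ?_, ?_⟩
  · intro i hi
    rcases Nat.lt_succ_iff_lt_or_eq.1 hi with hi | rfl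
    · exact h1 i hi
    · refine ⟨d, d + 1, by omega, ?_⟩
      ext x; rw [hmem, Finset.mem_Icc]; omega
  · intro c
    constructor
    · rintro ⟨hc1, hc2⟩
      by_cases hc : c = d + 1
      · exact ⟨n, by omega, (hmem c).2 (Or.inr hc)⟩
      · obtain ⟨i, hi, hci⟩ := (h2 c).1 ⟨hc1, by omega⟩
        exact ⟨i, by omega, hci⟩
    · rintro ⟨i, hi, hci⟩
      rcases Nat.lt_succ_iff_lt_or_eq.1 hi with hi | rfl
      · have := (h2 c).2 ⟨i, hi, hci⟩
        omega
      · have := (hmem c).1 hci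
        omega
  · intro i j hij hj s hs t ht
    rcases Nat.lt_succ_iff_lt_or_eq.1 hj with hj | rfl
    · exact h3 i j hij hj s hs t ht
    · have := (hmem t).1 ht
      have := hle i hij s hs
      omega
  · intro i j hij hj c hci hcj
    rcases Nat.lt_succ_iff_lt_or_eq.1 hj with hj | rfl
    · exact h4 i j hij hj c hci hcj
    · have := (hmem c).1 hcj
      have := hle i hij c hci
      have hcd : c = d := by omega
      subst hcd
      have := htop i hij hci
      refine ⟨by omega, ?_, hm⟩
      rw [hl, Finset.card_pair (by omega)]
  · intro i hi hi1 hc c hci hx hmc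
    rcases Nat.lt_succ_iff_lt_or_eq.1 hi with hi | rfl
    · exact h5 i hi hi1 hc c hci hx hmc
    · have := (hmem c).1 hci
      have := hx d ((hmem d).2 (Or.inl rfl))
      have hcd : c = d := by omega
      rw [hcd]; exact hlast.2

theorem overlap_iff (d : ℕ) (S : List (Finset ℕ)) :
    (∃ i j : Fin S.length, i ≠ j ∧ d ∈ S.get i ∧ d ∈ S.get j) ↔
    ∃ i j, i < j ∧ j < S.length ∧ d ∈ S.getD i ∅ ∧ d ∈ S.getD j ∅ := by
  simp only [get_eq_getD]
  constructor
  · rintro ⟨i, j, hij, hi, hj⟩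
    rcases lt_or_gt_of_ne hij with h | h
    · exact ⟨i, j, h, j.2, hi, hj⟩
    · exact ⟨j, i, h, i.2, hj, hi⟩
  · rintro ⟨i, j, hij, hjn, hi, hj⟩
    exact ⟨⟨i, hij.trans hjn⟩, ⟨j, hjn⟩, by simp [Fin.ext_iff]; omega, hi, hj⟩

/-- The structure of overlapping tuples. -/
theorem struct {a d : ℕ} {M : ℕ → ℕ} {S : List (Finset ℕ)}
    (h : IsValidTuple a (d + 1) M S)
    (ho : ∃ i j : Fin S.length, i ≠ j ∧ d ∈ S.get i ∧ d ∈ S.get j) :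
    ∃ S' : List (Finset ℕ), S = S' ++ [{d, d + 1}] ∧ 1 ≤ S'.length ∧
      IsValidTuple a d M S' ∧
      ∀ i : Fin S.length, d ∈ S.get i ↔ ((i : ℕ) = S.length - 1 ∨ (i : ℕ) = S.length - 2) := by
  rw [valid_iff_s4] at h
  rw [overlap_iff] at ho
  obtain ⟨i, j, hij, hj, hi1, hj1⟩ := ho
  obtain ⟨hn, e, hT⟩ := part1 h hij hj hi1 hj1
  subst e
  rcases List.eq_nil_or_concat' S with rfl | ⟨S', T, rfl⟩
  · simp at hn
  have hlen : S'.length = i + 1 := by simp at hn; omega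
  have hT' : T = {d, d + 1} := by
    rw [← hT]; simp [← hlen]
  subst hT'
  refine ⟨S', rfl, by omega, ?_, ?_⟩
  · rw [valid_iff_s4, hlen]
    rw [hn] at h
    refine VN_congr ?_ (part2 h hi1 hT)
    intro k hk
    simp only [List.getD_eq_getElem?_getD]
    rw [List.getElem?_append_left (by omega)]
  · intro k
    rw [get_eq_getD]
    constructor
    · intro hk
      by_cases hki : (k : ℕ) < i + 1
      · have := part1 h hki hj hk hj1
        omega
      · have := k.2
        omega
    · rintro (hk | hk)
      · rw [hk, hn]; exact hj1
      · rw [hk, hn]; exact hi1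

theorem append_valid {a d : ℕ} {M : ℕ → ℕ} {S : List (Finset ℕ)} (had : a ≤ d) (hm : 1 < M d)
    (h : IsValidTuple a d M S) :
    IsValidTuple a (d + 1) M (S ++ [{d, d + 1}]) ∧
    ∃ i j : Fin (S ++ [({d, d + 1} : Finset ℕ)]).length,
      i ≠ j ∧ d ∈ (S ++ [({d, d + 1} : Finset ℕ)]).get i ∧
        d ∈ (S ++ [({d, d + 1} : Finset ℕ)]).get j := by
  rw [valid_iff_s4] at h
  rw [overlap_iff, valid_iff_s4]
  have h' : VN a d M S.length (fun i => (S ++ [({d, d + 1} : Finset ℕ)]).getD i ∅) := by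
    refine VN_congr ?_ h
    intro k hk
    simp only [List.getD_eq_getElem?_getD]
    rw [List.getElem?_append_left (by omega)]
  have hl : (S ++ [({d, d + 1} : Finset ℕ)]).getD S.length ∅ = {d, d + 1} := by simp
  obtain ⟨p, q, r⟩ := part3 had hm h' hl
  refine ⟨?_, S.length - 1, S.length, by omega, by simp, r, by rw [hl]; simp⟩
  rw [List.length_append]; exact p

/-- Suppose `m_{cmax-1} > 1`. If `S` is a valid tuple for `M` in which `cmax - 1`
belongs to more than one of the sets, then `cmax - 1` belongs to exactly the two
last sets `S_{k-1}` and `S_k`, and `S_k = {cmax - 1, cmax}`. Moreover dropping the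
last set is a bijection from the set of such valid tuples for `M` onto the set of
all valid tuples for `M'`, with inverse appending the set `{cmax - 1, cmax}`. -/
theorem bijOn_overlap_case (cmin cmax : ℕ) (M : ℕ → ℕ)
    (hlt : cmin < cmax) (hM : IsBlockTuple cmin cmax M)
    (h1 : 1 < M (cmax - 1)) :
    (∀ S : List (Finset ℕ), IsValidTuple cmin cmax M S →
      (∃ i j : Fin S.length, i ≠ j ∧ cmax - 1 ∈ S.get i ∧ cmax - 1 ∈ S.get j) →
      2 ≤ S.length ∧
      S.getLastD ∅ = ({cmax - 1, cmax} : Finset ℕ) ∧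
      (∀ i : Fin S.length, cmax - 1 ∈ S.get i ↔
        ((i : ℕ) = S.length - 1 ∨ (i : ℕ) = S.length - 2))) ∧
    Set.BijOn (fun S : List (Finset ℕ) => S.dropLast)
      {S : List (Finset ℕ) | IsValidTuple cmin cmax M S ∧
        ∃ i j : Fin S.length, i ≠ j ∧ cmax - 1 ∈ S.get i ∧ cmax - 1 ∈ S.get j}
      {S' : List (Finset ℕ) | IsValidTuple cmin (cmax - 1) M S'} ∧
    Set.InvOn (fun S' : List (Finset ℕ) => S' ++ [({cmax - 1, cmax} : Finset ℕ)])
      (fun S : List (Finset ℕ) => S.dropLast)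
      {S : List (Finset ℕ) | IsValidTuple cmin cmax M S ∧
        ∃ i j : Fin S.length, i ≠ j ∧ cmax - 1 ∈ S.get i ∧ cmax - 1 ∈ S.get j}
      {S' : List (Finset ℕ) | IsValidTuple cmin (cmax - 1) M S'} := by
  obtain ⟨d, rfl⟩ : ∃ d, cmax = d + 1 := ⟨cmax - 1, by omega⟩
  simp only [Nat.add_sub_cancel] at *
  have had : cmin ≤ d := by omega
  have left : Set.LeftInvOn (fun S' : List (Finset ℕ) => S' ++ [({d, d + 1} : Finset ℕ)])
      (fun S : List (Finset ℕ) => S.dropLast)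
      {S : List (Finset ℕ) | IsValidTuple cmin (d + 1) M S ∧
        ∃ i j : Fin S.length, i ≠ j ∧ d ∈ S.get i ∧ d ∈ S.get j} := by
    rintro S ⟨hS, ho⟩
    obtain ⟨S', rfl, -⟩ := struct hS ho
    simp
  have right : Set.RightInvOn (fun S' : List (Finset ℕ) => S' ++ [({d, d + 1} : Finset ℕ)])
      (fun S : List (Finset ℕ) => S.dropLast)
      {S' : List (Finset ℕ) | IsValidTuple cmin d M S'} := by
    intro S _
    simp
  refine ⟨?_, ?_, left, right⟩
  · intro S hS ho
    obtain ⟨S', e, hl, -, hi⟩ := struct hS ho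
    refine ⟨?_, ?_, hi⟩
    · rw [e]; simp; omega
    · rw [e]; simp
  · refine Set.InvOn.bijOn ⟨left, right⟩ ?_ ?_
    · rintro S ⟨hS, ho⟩
      obtain ⟨S', rfl, -, hv, -⟩ := struct hS ho
      simpa using hv
    · intro S hS
      exact append_valid had h1 hS
end

section
/- Fix integers 0 ≤ c_min and c_max ≥ c_min + 2, and a block-tuple M = (m_{c_min}, …, m_{c_max}). If S' = (S'_1, …, S'_k) is a valid tuple for M' that fails property (Q), then S'_k = {c_max − 1}, and the map S' ↦ (S'_1, …, S'_{k−1}) is a bijection from the set of valid tuples for M' failing property (Q) onto the set of all valid tuples for M''; its inverse appends the singleton {c_max − 1}. -/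
/-- Property (Q) for a tuple `S'` (a candidate valid tuple for `M'`): if the
minimum of the last set `S'_k` is `cmax - 1`, then `k ≥ 2` and
`cmax - 1 ∈ S'_{k-1}`. -/
def PropQ (cmax : ℕ) (S' : List (Finset ℕ)) : Prop :=
  (cmax - 1 ∈ S'.getLastD ∅ ∧ ∀ x ∈ S'.getLastD ∅, cmax - 1 ≤ x) →
    (2 ≤ S'.length ∧ cmax - 1 ∈ S'.getD (S'.length - 2) ∅)

/-- Reformulation of validity with optional indexing. -/
def VT (cmin cmax : ℕ) (M : ℕ → ℕ) (S : List (Finset ℕ)) : Prop :=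
  (∀ (i : ℕ) (A : Finset ℕ), S[i]? = some A → ∃ a b : ℕ, a ≤ b ∧ A = Finset.Icc a b) ∧
  (∀ c : ℕ, (cmin ≤ c ∧ c ≤ cmax) ↔ ∃ (i : ℕ) (A : Finset ℕ), S[i]? = some A ∧ c ∈ A) ∧
  (∀ (i j : ℕ) (A B : Finset ℕ), S[i]? = some A → S[j]? = some B → i < j → ∀ s ∈ A, ∀ t ∈ B, s ≤ t) ∧
  (∀ (i j : ℕ) (A B : Finset ℕ), S[i]? = some A → S[j]? = some B → i < j → ∀ c : ℕ, c ∈ A → c ∈ B →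
    j = i + 1 ∧ 2 ≤ B.card ∧ 1 < M c) ∧
  (∀ (i : ℕ) (A : Finset ℕ), S[i]? = some A → 1 ≤ i → 2 ≤ A.card →
    ∀ c : ℕ, c ∈ A → (∀ x ∈ A, c ≤ x) → 1 < M c →
    ∃ (j : ℕ) (B : Finset ℕ), S[j]? = some B ∧ j + 1 = i ∧ c ∈ B)

theorem isValid_iff_VT (cmin cmax : ℕ) (M : ℕ → ℕ) (S : List (Finset ℕ)) :
    IsValidTuple cmin cmax M S ↔ VT cmin cmax M S := by
  have key : ∀ (i : ℕ) (A : Finset ℕ), S[i]? = some A ↔ ∃ h : i < S.length, S.get ⟨i, h⟩ = A := by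
    intro i A
    simp [List.getElem?_eq_some_iff]
  unfold IsValidTuple VT
  simp only [key, Finset.mem_Icc]
  constructor
  · rintro ⟨h1, h2, h3, h4, h5⟩
    refine ⟨?_, ?_, ?_, ?_, ?_⟩
    · rintro i A ⟨h, rfl⟩
      exact h1 _
    · intro c
      rw [h2]
      constructor
      · rintro ⟨i, hi⟩
        exact ⟨i, _, ⟨i.2, rfl⟩, hi⟩
      · rintro ⟨i, _, ⟨h, rfl⟩, hi⟩
        exact ⟨_, hi⟩
    · rintro i j A B ⟨h, rfl⟩ ⟨h', rfl⟩ hij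
      exact h3 _ _ hij
    · rintro i j A B ⟨h, rfl⟩ ⟨h', rfl⟩ hij
      exact h4 ⟨i, h⟩ ⟨j, h'⟩ hij
    · rintro i A ⟨h, rfl⟩ a b c d e f
      obtain ⟨j, hj, hc⟩ := h5 ⟨i, h⟩ a b c d e f
      exact ⟨j, _, ⟨j.2, rfl⟩, hj, hc⟩
  · rintro ⟨h1, h2, h3, h4, h5⟩
    refine ⟨?_, ?_, ?_, ?_, ?_⟩
    · intro i
      exact h1 i _ ⟨i.2, rfl⟩
    · intro c
      rw [h2]
      constructor
      · rintro ⟨i, _, ⟨h, rfl⟩, hi⟩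
        exact ⟨_, hi⟩
      · rintro ⟨i, hi⟩
        exact ⟨i, _, ⟨i.2, rfl⟩, hi⟩
    · intro i j hij
      exact h3 i j _ _ ⟨i.2, rfl⟩ ⟨j.2, rfl⟩ hij
    · intro i j hij
      exact h4 i j _ _ ⟨i.2, rfl⟩ ⟨j.2, rfl⟩ hij
    · intro i a b c d e f
      obtain ⟨j, _, ⟨h, rfl⟩, hj, hc⟩ := h5 i _ ⟨i.2, rfl⟩ a b c d e f
      exact ⟨⟨j, h⟩, hj, hc⟩

theorem getElem?_concat_iff (L : List (Finset ℕ)) (X A : Finset ℕ) (i : ℕ) :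
    (L ++ [X])[i]? = some A ↔ (L[i]? = some A ∨ (i = L.length ∧ A = X)) := by
  rcases lt_trichotomy i L.length with h | h | h
  · rw [List.getElem?_append_left h]
    constructor
    · exact Or.inl
    · rintro (h' | ⟨h', -⟩)
      · exact h'
      · omega
  · subst h
    simp [eq_comm]
  · have : (L ++ [X])[i]? = none := by simp; omega
    have h' : L[i]? = none := by simp; omega
    rw [this, h']
    simp
    omega

theorem VT_concat (cmin n : ℕ) (M : ℕ → ℕ) (L : List (Finset ℕ)) (hn : cmin ≤ n) :
    VT cmin (n + 1) M (L ++ [{n + 1}]) ↔ VT cmin n M L := by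
  have hlt : ∀ (i : ℕ) (A : Finset ℕ), L[i]? = some A → i < L.length := by
    intro i A h
    exact (List.getElem?_eq_some_iff.1 h).1
  unfold VT
  simp only [getElem?_concat_iff]
  constructor
  · rintro ⟨h1, h2, h3, h4, h5⟩
    refine ⟨?_, ?_, ?_, ?_, ?_⟩
    · intro i A h
      exact h1 i A (Or.inl h)
    · intro c
      constructor
      · intro hc
        obtain ⟨i, A, h | ⟨-, rfl⟩, hA⟩ := (h2 c).1 ⟨hc.1, by omega⟩
        · exact ⟨i, A, h, hA⟩
        · simp at hA
          omega
      · rintro ⟨i, A, h, hA⟩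
        have := (h2 c).2 ⟨i, A, Or.inl h, hA⟩
        by_cases hc : c = n + 1
        · have := h4 i L.length A {n + 1} (Or.inl h) (Or.inr ⟨rfl, rfl⟩) (hlt _ _ h) c hA (by simp [hc])
          simp at this
        · omega
    · intro i j A B hA hB
      exact h3 i j A B (Or.inl hA) (Or.inl hB)
    · intro i j A B hA hB
      exact h4 i j A B (Or.inl hA) (Or.inl hB)
    · intro i A hA a b c d e f
      obtain ⟨j, B, h | ⟨rfl, -⟩, hj, hc⟩ := h5 i A (Or.inl hA) a b c d e f
      · exact ⟨j, B, h, hj, hc⟩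
      · have := hlt _ _ hA
        omega
  · rintro ⟨h1, h2, h3, h4, h5⟩
    have hle : ∀ (i : ℕ) (A : Finset ℕ), L[i]? = some A → ∀ c ∈ A, c ≤ n := fun i A h c hc =>
      ((h2 c).2 ⟨i, A, h, hc⟩).2
    refine ⟨?_, ?_, ?_, ?_, ?_⟩
    · rintro i A (h | ⟨-, rfl⟩)
      · exact h1 i A h
      · exact ⟨n + 1, n + 1, le_rfl, by simp⟩
    · intro c
      constructor
      · intro hc
        by_cases hc' : c = n + 1
        · exact ⟨L.length, {n + 1}, Or.inr ⟨rfl, rfl⟩, by simp [hc']⟩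
        · obtain ⟨i, A, h, hA⟩ := (h2 c).1 ⟨hc.1, by omega⟩
          exact ⟨i, A, Or.inl h, hA⟩
      · rintro ⟨i, A, h | ⟨-, rfl⟩, hA⟩
        · have := (h2 c).2 ⟨i, A, h, hA⟩
          omega
        · simp at hA
          omega
    · rintro i j A B (hA | ⟨rfl, rfl⟩) (hB | ⟨rfl, rfl⟩) hij s hs t ht
      · exact h3 i j A B hA hB hij s hs t ht
      · have := hle _ _ hA s hs
        simp at ht
        omega
      · have := hlt _ _ hB
        omega
      · omega
    · rintro i j A B (hA | ⟨rfl, rfl⟩) (hB | ⟨rfl, rfl⟩) hij c hs ht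
      · exact h4 i j A B hA hB hij c hs ht
      · have := hle _ _ hA c hs
        simp at ht
        omega
      · have := hlt _ _ hB
        omega
      · omega
    · rintro i A (hA | ⟨rfl, rfl⟩) a b c d e f
      · obtain ⟨j, B, h, hj, hc⟩ := h5 i A hA a b c d e f
        exact ⟨j, B, Or.inl h, hj, hc⟩
      · simp at b

theorem fail_form (cmin n : ℕ) (M : ℕ → ℕ) (S : List (Finset ℕ))
    (hS : IsValidTuple cmin (n + 1) M S) (hQ : ¬ PropQ (n + 2) S) :
    ∃ L, S = L ++ [{n + 1}] := by
  rcases List.eq_nil_or_concat' S with rfl | ⟨L, X, rfl⟩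
  · exact absurd (by simp [PropQ]) hQ
  · refine ⟨L, ?_⟩
    unfold PropQ at hQ
    push Not at hQ
    obtain ⟨⟨ha, hb⟩, -⟩ := hQ
    simp at ha hb
    rw [isValid_iff_VT] at hS
    have hX : X = {n + 1} := by
      ext c
      simp only [Finset.mem_singleton]
      constructor
      · intro hc
        have := hb c hc
        have := (hS.2.1 c).2 ⟨L.length, X, by simp, hc⟩
        omega
      · rintro rfl
        exact ha
    rw [hX]

theorem fail_concat (cmin n : ℕ) (M : ℕ → ℕ) (L : List (Finset ℕ))
    (hL : IsValidTuple cmin n M L) : ¬ PropQ (n + 2) (L ++ [{n + 1}]) := by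
  intro hQ
  obtain ⟨h1, h2⟩ := hQ (by simp)
  rw [isValid_iff_VT] at hL
  simp only [List.length_append, List.length_singleton] at h1 h2
  have hlt : L.length + 1 - 2 < L.length := by omega
  rw [List.getD_append _ _ _ _ hlt, List.getD_eq_getElem _ _ hlt] at h2
  have := (hL.2.1 (n + 2 - 1)).2 ⟨_, _, List.getElem?_eq_getElem hlt, h2⟩
  omega

/-- Suppose `cmax ≥ cmin + 2`. A valid tuple for `M'` failing property (Q) has
last set `{cmax - 1}`, and dropping the last set is a bijection from the set of
valid tuples for `M'` failing property (Q) onto the set of all valid tuples for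
`M''`; its inverse appends the singleton `{cmax - 1}`. -/
theorem bijOn_failQ (cmin cmax : ℕ) (M : ℕ → ℕ)
    (h2 : cmin + 2 ≤ cmax) (hM : IsBlockTuple cmin cmax M) :
    (∀ S' : List (Finset ℕ), IsValidTuple cmin (cmax - 1) M S' → ¬ PropQ cmax S' →
      S'.getLastD ∅ = ({cmax - 1} : Finset ℕ)) ∧
    Set.BijOn (fun S' : List (Finset ℕ) => S'.dropLast)
      {S' : List (Finset ℕ) | IsValidTuple cmin (cmax - 1) M S' ∧ ¬ PropQ cmax S'}
      {S'' : List (Finset ℕ) | IsValidTuple cmin (cmax - 2) M S''} ∧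
    Set.InvOn (fun S'' : List (Finset ℕ) => S'' ++ [({cmax - 1} : Finset ℕ)])
      (fun S' : List (Finset ℕ) => S'.dropLast)
      {S' : List (Finset ℕ) | IsValidTuple cmin (cmax - 1) M S' ∧ ¬ PropQ cmax S'}
      {S'' : List (Finset ℕ) | IsValidTuple cmin (cmax - 2) M S''} := by
  obtain ⟨n, rfl⟩ : ∃ n, cmax = n + 2 := ⟨cmax - 2, by omega⟩
  have e1 : n + 2 - 1 = n + 1 := rfl
  have e2 : n + 2 - 2 = n := rfl
  rw [e1, e2]
  have hn : cmin ≤ n := by omega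
  have hL : Set.LeftInvOn (fun S'' : List (Finset ℕ) => S'' ++ [({n + 1} : Finset ℕ)])
      (fun S' : List (Finset ℕ) => S'.dropLast)
      {S' : List (Finset ℕ) | IsValidTuple cmin (n + 1) M S' ∧ ¬ PropQ (n + 2) S'} := by
    rintro S ⟨hS, hQ⟩
    obtain ⟨L, rfl⟩ := fail_form cmin n M S hS hQ
    simp
  have hR : Set.RightInvOn (fun S'' : List (Finset ℕ) => S'' ++ [({n + 1} : Finset ℕ)])
      (fun S' : List (Finset ℕ) => S'.dropLast)
      {S'' : List (Finset ℕ) | IsValidTuple cmin n M S''} := by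
    intro S _
    simp
  refine ⟨?_, Set.InvOn.bijOn ⟨hL, hR⟩ ?_ ?_, hL, hR⟩
  · intro S hS hQ
    obtain ⟨L, rfl⟩ := fail_form cmin n M S hS hQ
    simp
  · rintro S ⟨hS, hQ⟩
    obtain ⟨L, rfl⟩ := fail_form cmin n M S hS hQ
    rw [isValid_iff_VT, VT_concat _ _ _ _ hn, ← isValid_iff_VT] at hS
    simpa using hS
  · intro L hS
    refine ⟨?_, fail_concat cmin n M L hS⟩
    rw [isValid_iff_VT, VT_concat _ _ _ _ hn, ← isValid_iff_VT]
    exact hS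
end
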